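/- Let 𝓓 = (Ω, 𝓑) be a β(i) design with parameter (v, k, d), i ≥ 2, c = k−d, b = |𝓑| and n = |S₁| (note n > 0). Then (b/n)·C(c+d, d+i−2)·C(v−k, i−2) ≤ 1 + (i−1)(v−k−i+1)(v−k−i+2) / ( (d+i−1)(c−i+1)(c−i+2) ). Moreover, equality holds if and only if the number |{B ∈ 𝓑 : |B ∩ X| = d+i−2}| is the same for every X ∈ S₁. -/

import Mathlib

open Finset

variable {α : Type*} [Fintype α] [DecidableEq α]

/-- `𝓑` is a design on the finite type `α` of cardinality `v`, with block size `k` and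
maximal pairwise block intersection size `d`. -/
def IsDesign (𝓑 : Finset (Finset α)) (v k d : ℕ) : Prop :=
  Fintype.card α = v ∧ 2 ≤ 𝓑.card ∧ d < k ∧ k < v ∧
  (∀ B ∈ 𝓑, B.card = k) ∧
  (∀ B ∈ 𝓑, ∀ C ∈ 𝓑, B ≠ C → (B ∩ C).card ≤ d) ∧
  (∃ B ∈ 𝓑, ∃ C ∈ 𝓑, B ≠ C ∧ (B ∩ C).card = d)

/-- `𝓑` is a `β(i)` design with parameters `(v, k, d)`: a design such that
`1 ≤ i ≤ (v - d + 1)/2` and every `(d + 2i - 1)`-element subset `X` of `Ω` admits a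
unique block `B` with `|X ∩ B| ≥ d + i`. -/
def IsBetaDesign (𝓑 : Finset (Finset α)) (v k d i : ℕ) : Prop :=
  IsDesign 𝓑 v k d ∧ 1 ≤ i ∧ 2 * i ≤ v - d + 1 ∧
  ∀ X : Finset α, X.card = d + 2 * i - 1 →
    ∃! B, B ∈ 𝓑 ∧ d + i ≤ (X ∩ B).card

/-- The family `S₁` of all `(d + 2(i-2))`-element subsets `X` of `Ω` such that
`|X ∩ B| ≤ d + i - 2` for every block `B ∈ 𝓑`. -/
def S1 (𝓑 : Finset (Finset α)) (d i : ℕ) : Finset (Finset α) :=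
  (Finset.univ : Finset (Finset α)).filter
    (fun X => X.card = d + 2 * (i - 2) ∧ ∀ B ∈ 𝓑, (X ∩ B).card ≤ d + i - 2)

/-!
Write `m(X)` for the number of blocks meeting `X` in `d + i - 2` points. Since two blocks share at
most `d` points, a `(d + 2(i - 2))`-set with `m(X) ≠ 0` lies in `S₁`, so the moments of `m` over
`S₁` can be computed over all `(d + 2(i - 2))`-sets. The first moment counts pairs `X, B`; the
second counts triples `X, B, C`, and when `B ≠ C` such an `X` exists only if `|B ∩ C| = d`.
Counting the `(d + 2i - 1)`-sets that meet a block `B` in `d + i - 1` points (for each of them the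
unique block of the `β(i)` property is a block `C ≠ B`, with `|B ∩ C| = d`) shows that the number
of such `C` does not depend on `B`. Hence `∑ m² = (1 + R) ∑ m` for an explicit constant `R`, and
the Cauchy–Schwarz inequality `(∑ m)² ≤ n ∑ m²` with its equality case is the claim.
-/

section Mean

variable {ι K : Type*}

theorem sum_sum_sub_sq [CommRing K] (s : Finset ι) (f : ι → K) :
    ∑ i ∈ s, ∑ j ∈ s, (f i - f j) ^ 2 = 2 * (#s * ∑ i ∈ s, f i ^ 2 - (∑ i ∈ s, f i) ^ 2) := by
  simp only [sub_sq, sum_add_distrib, sum_sub_distrib, sum_const, nsmul_eq_mul, ← mul_sum,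
    ← sum_mul]
  ring

theorem sq_sum_eq_card_mul_sum_sq_iff [CommRing K] [LinearOrder K] [IsStrictOrderedRing K]
    (s : Finset ι) (f : ι → K) :
    (∑ i ∈ s, f i) ^ 2 = #s * ∑ i ∈ s, f i ^ 2 ↔ (s : Set ι).Pairwise (f · = f ·) := by
  have hnonneg : ∀ i ∈ s, 0 ≤ ∑ j ∈ s, (f i - f j) ^ 2 :=
    fun i _ ↦ sum_nonneg fun j _ ↦ sq_nonneg _
  calc (∑ i ∈ s, f i) ^ 2 = #s * ∑ i ∈ s, f i ^ 2
      ↔ ∑ i ∈ s, ∑ j ∈ s, (f i - f j) ^ 2 = 0 := by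
        rw [sum_sum_sub_sq, mul_eq_zero, sub_eq_zero, eq_comm]
        simp only [OfNat.ofNat_ne_zero, false_or]
    _ ↔ ∀ i ∈ s, ∀ j ∈ s, f i = f j := by
        rw [sum_eq_zero_iff_of_nonneg hnonneg]
        simp only [sum_eq_zero_iff_of_nonneg fun _ _ ↦ sq_nonneg _, sq_eq_zero_iff, sub_eq_zero]
    _ ↔ (s : Set ι).Pairwise (f · = f ·) :=
        ⟨fun h i hi j hj _ ↦ h i hi j hj, fun h i hi j hj ↦
          (eq_or_ne i j).elim (congrArg f) (h hi hj)⟩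

variable [Field K] [LinearOrder K] [IsStrictOrderedRing K] {s : Finset ι} {f : ι → K} {r : K}

theorem sum_div_card_le_of_sum_sq_eq (hpos : 0 < ∑ i ∈ s, f i)
    (hsq : ∑ i ∈ s, f i ^ 2 = r * ∑ i ∈ s, f i) : (∑ i ∈ s, f i) / #s ≤ r := by
  have hs : (0 : K) < #s := Nat.cast_pos.2 (nonempty_of_sum_ne_zero hpos.ne').card_pos
  rw [div_le_iff₀ hs]
  refine le_of_mul_le_mul_right ?_ hpos
  calc (∑ i ∈ s, f i) * ∑ i ∈ s, f i = (∑ i ∈ s, f i) ^ 2 := (sq _).symm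
    _ ≤ #s * ∑ i ∈ s, f i ^ 2 := sq_sum_le_card_mul_sum_sq
    _ = r * #s * ∑ i ∈ s, f i := by rw [hsq]; ring

theorem sum_div_card_eq_iff_of_sum_sq_eq (hpos : 0 < ∑ i ∈ s, f i)
    (hsq : ∑ i ∈ s, f i ^ 2 = r * ∑ i ∈ s, f i) :
    (∑ i ∈ s, f i) / #s = r ↔ (s : Set ι).Pairwise (f · = f ·) := by
  have hs : (#s : K) ≠ 0 := Nat.cast_ne_zero.2 (nonempty_of_sum_ne_zero hpos.ne').card_ne_zero
  rw [div_eq_iff hs, ← sq_sum_eq_card_mul_sum_sq_iff, hsq, sq, mul_left_comm, ← mul_assoc,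
    mul_left_inj' hpos.ne']

end Mean

theorem cast_choose_succ {K : Type*} [Field K] [CharZero K] (n r : ℕ) :
    (n.choose (r + 1) : K) = n.choose r * (n - r) / (r + 1) := by
  rw [eq_div_iff (Nat.cast_add_one_ne_zero r)]
  rcases le_or_gt r n with h | h
  · rw [← Nat.cast_sub h]
    exact_mod_cast n.choose_succ_right_eq r
  · simp [Nat.choose_eq_zero_of_lt h, Nat.choose_eq_zero_of_lt (h.trans r.lt_succ_self)]

section SetCounting

section

variable {β : Type*} [DecidableEq β]

theorem card_inter_add_card_inter_le (X B C : Finset β) :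
    #(X ∩ B) + #(X ∩ C) ≤ #X + #(B ∩ C) := by
  rw [← card_union_add_card_inter]
  gcongr <;> grind

theorem card_inter_eq_of_inter_subset {X B C : Finset β} (h : B ∩ C ⊆ X) :
    #(X ∩ B) = #(B ∩ C) + #(X ∩ (B \ C)) := by
  rw [← card_inter_add_card_sdiff (X ∩ B) C]
  congr 2 <;> grind

theorem card_inter_add_card_inter_eq_iff {X B C : Finset β} :
    #(X ∩ B) + #(X ∩ C) = #X + #(B ∩ C) ↔ B ∩ C ⊆ X ∧ X ⊆ B ∪ C := by
  have hunion : #((X ∩ B) ∪ (X ∩ C)) ≤ #X := card_le_card (by grind)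
  have hinter : #((X ∩ B) ∩ (X ∩ C)) ≤ #(B ∩ C) := card_le_card (by grind)
  rw [← card_union_add_card_inter, add_eq_add_iff_eq_and_eq hunion hinter]
  constructor
  · rintro ⟨hX, hBC⟩
    have hX := eq_of_subset_of_card_le (by grind) hX.ge
    have hBC := eq_of_subset_of_card_le (by grind) hBC.ge
    grind
  · rintro ⟨hBC, hX⟩
    constructor <;> congr 1 <;> grind

end

theorem card_filter_card_inter_eq_and_sdiff_eq {s t u : Finset α} (hst : Disjoint s t)
    (hu : Disjoint (s ∪ t) u) (p q : ℕ) :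
    #{X : Finset α | #(X ∩ s) = p ∧ #(X ∩ t) = q ∧ X \ (s ∪ t) = u}
      = (#s).choose p * (#t).choose q := by
  rw [← card_powersetCard, ← card_powersetCard, ← card_product]
  rw [disjoint_left] at hst hu
  have inter_left {S T} (hS : S ⊆ s) (hT : T ⊆ t) : (S ∪ T ∪ u) ∩ s = S := by grind
  have inter_right {S T} (hS : S ⊆ s) (hT : T ⊆ t) : (S ∪ T ∪ u) ∩ t = T := by grind
  have sdiff {S T} (hS : S ⊆ s) (hT : T ⊆ t) : (S ∪ T ∪ u) \ (s ∪ t) = u := by grind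
  refine card_nbij' (fun X ↦ (X ∩ s, X ∩ t)) (fun Z ↦ Z.1 ∪ Z.2 ∪ u) ?_ ?_ ?_ ?_
  · intro X
    simp +contextual [mem_powersetCard]
  · rintro ⟨S, T⟩ hST
    simp only [coe_product, Set.mem_prod, mem_coe, mem_powersetCard] at hST
    obtain ⟨⟨hS, hSp⟩, hT, hTq⟩ := hST
    simp only [coe_filter, mem_univ, true_and, Set.mem_ofPred_eq, inter_left hS hT,
      inter_right hS hT, sdiff hS hT, hSp, hTq, and_self]
  · intro X hX
    simp only [coe_filter, mem_univ, true_and, Set.mem_ofPred_eq] at hX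
    grind
  · rintro ⟨S, T⟩ hST
    simp only [coe_product, Set.mem_prod, mem_coe, mem_powersetCard] at hST
    exact Prod.ext (inter_left hST.1.1 hST.2.1) (inter_right hST.1.1 hST.2.1)

theorem card_filter_card_inter_eq_and (B C : Finset α) (p q : ℕ) :
    #{X ∈ powersetCard (#(B ∩ C) + p + q) univ |
        #(X ∩ B) = #(B ∩ C) + p ∧ #(X ∩ C) = #(B ∩ C) + q}
      = (#(B \ C)).choose p * (#(C \ B)).choose q := by
  rw [← card_filter_card_inter_eq_and_sdiff_eq (u := B ∩ C) disjoint_sdiff_sdiff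
    (by rw [disjoint_left]; grind)]
  congr 1
  ext X
  simp only [mem_filter, mem_powersetCard_univ, mem_univ, true_and]
  have hsdiff : X \ (B \ C ∪ C \ B) = B ∩ C ↔ B ∩ C ⊆ X ∧ X ⊆ B ∪ C := by
    constructor <;> intro h <;> grind
  have hcard (h : B ∩ C ⊆ X) : #(X ∩ B) = #(B ∩ C) + #(X ∩ (B \ C)) ∧
      #(X ∩ C) = #(B ∩ C) + #(X ∩ (C \ B)) :=
    ⟨card_inter_eq_of_inter_subset h,
      inter_comm C B ▸ card_inter_eq_of_inter_subset (inter_comm B C ▸ h)⟩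
  rw [hsdiff, ← card_inter_add_card_inter_eq_iff]
  constructor
  · rintro ⟨hX, hXB, hXC⟩
    have hBCX := (card_inter_add_card_inter_eq_iff (X := X) (B := B) (C := C)).1 (by omega)
    have := hcard hBCX.1
    omega
  · rintro ⟨hXB, hXC, hX⟩
    have := hcard (card_inter_add_card_inter_eq_iff.1 hX).1
    omega

theorem card_filter_card_inter_eq (B : Finset α) (p q : ℕ) :
    #{X ∈ powersetCard (p + q) univ | #(X ∩ B) = p}
      = (#B).choose p * (Fintype.card α - #B).choose q := by
  have h := card_filter_card_inter_eq_and B Bᶜ p q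
  simp only [inter_compl, card_empty, zero_add, sdiff_eq_inter_compl, compl_compl, inter_self,
    card_compl] at h
  rw [← h]
  refine congrArg card (filter_congr fun X hX ↦ ?_)
  have hsplit := card_inter_add_card_sdiff X B
  rw [sdiff_eq_inter_compl] at hsplit
  rw [mem_powersetCard_univ] at hX
  omega

theorem card_filter_card_inter_eq_and_of_card_inter_le {B C : Finset α} {d : ℕ}
    (hBC : #(B ∩ C) ≤ d) (p q : ℕ) :
    #{X ∈ powersetCard (d + p + q) univ | #(X ∩ B) = d + p ∧ #(X ∩ C) = d + q}
      = if #(B ∩ C) = d then (#B - d).choose p * (#C - d).choose q else 0 := by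
  split_ifs with h
  · subst h
    rw [card_filter_card_inter_eq_and, card_sdiff, card_sdiff, inter_comm C B]
  · rw [card_eq_zero, filter_eq_empty_iff]
    rintro X hX ⟨hXB, hXC⟩
    have := card_inter_add_card_inter_le X B C
    rw [mem_powersetCard_univ] at hX
    omega

end SetCounting

/-- The number of members of the family `𝓑` that meet `X` in exactly `t` points. For
`t = d + i - 2` this is the function on `S₁` whose constancy characterises equality in
Proposition 5.3; for a block `X` and `t = d` it counts the blocks at maximal intersection. -/
def traceCount {β : Type*} [DecidableEq β] (𝓑 : Finset (Finset β)) (t : ℕ) (X : Finset β) : ℕ :=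
  #{B ∈ 𝓑 | #(X ∩ B) = t}

section TraceCount

section

variable {β : Type*} [DecidableEq β] {𝓑 : Finset (Finset β)}

theorem sum_mul_traceCount (𝓑 𝓢 : Finset (Finset β)) (f : Finset β → ℕ) (t : ℕ) :
    ∑ X ∈ 𝓢, f X * traceCount 𝓑 t X = ∑ B ∈ 𝓑, ∑ X ∈ 𝓢 with #(X ∩ B) = t, f X := by
  simp only [traceCount, card_filter, mul_sum, mul_ite, mul_one, mul_zero, sum_filter]
  exact sum_comm

theorem sum_traceCount (𝓑 𝓢 : Finset (Finset β)) (t : ℕ) :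
    ∑ X ∈ 𝓢, traceCount 𝓑 t X = ∑ B ∈ 𝓑, #{X ∈ 𝓢 | #(X ∩ B) = t} := by
  simpa only [one_mul, card_eq_sum_ones] using sum_mul_traceCount 𝓑 𝓢 (fun _ ↦ 1) t

theorem traceCount_eq_traceCount_erase_add_one {B X : Finset β} {t : ℕ} (hB : B ∈ 𝓑)
    (hXB : #(X ∩ B) = t) : traceCount 𝓑 t X = traceCount (𝓑.erase B) t X + 1 := by
  rw [traceCount, traceCount, filter_erase, card_erase_add_one (mem_filter.2 ⟨hB, hXB⟩)]

end

variable {𝓑 : Finset (Finset α)} {k d : ℕ}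

theorem sum_traceCount_powersetCard (h𝓑 : (𝓑 : Set (Finset α)).Sized k) (t q : ℕ) :
    ∑ X ∈ powersetCard (t + q) univ, traceCount 𝓑 t X
      = #𝓑 * (k.choose t * (Fintype.card α - k).choose q) := by
  rw [sum_traceCount, ← smul_eq_mul, ← sum_const]
  refine sum_congr rfl fun B hB ↦ ?_
  rw [card_filter_card_inter_eq, h𝓑 hB]

theorem sum_traceCount_erase (h𝓑 : (𝓑 : Set (Finset α)).Sized k)
    (hd : (𝓑 : Set (Finset α)).Pairwise fun B C ↦ #(B ∩ C) ≤ d) {B : Finset α} (hB : B ∈ 𝓑)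
    (p q : ℕ) :
    ∑ X ∈ powersetCard (d + p + q) univ with #(X ∩ B) = d + p, traceCount (𝓑.erase B) (d + q) X
      = traceCount (𝓑.erase B) d B * ((k - d).choose p * (k - d).choose q) := by
  rw [sum_traceCount, traceCount, ← smul_eq_mul, ← sum_const, sum_filter]
  refine sum_congr rfl fun C hC ↦ ?_
  obtain ⟨hCB, hC⟩ := mem_erase.1 hC
  rw [filter_filter, card_filter_card_inter_eq_and_of_card_inter_le (hd hB hC hCB.symm), h𝓑 hB,
    h𝓑 hC]

theorem sum_traceCount_sq_powersetCard (h𝓑 : (𝓑 : Set (Finset α)).Sized k)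
    (hd : (𝓑 : Set (Finset α)).Pairwise fun B C ↦ #(B ∩ C) ≤ d) (p : ℕ) :
    ∑ X ∈ powersetCard (d + p + p) univ, traceCount 𝓑 (d + p) X ^ 2
      = ∑ B ∈ 𝓑, (traceCount (𝓑.erase B) d B * (k - d).choose p ^ 2
          + k.choose (d + p) * (Fintype.card α - k).choose p) := by
  simp only [sq, sum_mul_traceCount]
  refine sum_congr rfl fun B hB ↦ ?_
  rw [← sum_traceCount_erase h𝓑 hd hB, ← h𝓑 hB, ← card_filter_card_inter_eq, card_eq_sum_ones,
    ← sum_add_distrib]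
  exact sum_congr rfl fun X hX ↦
    traceCount_eq_traceCount_erase_add_one hB (mem_filter.1 hX).2

theorem sum_S1_traceCount_pow (hd : (𝓑 : Set (Finset α)).Pairwise fun B C ↦ #(B ∩ C) ≤ d) {i : ℕ}
    (hi : 2 ≤ i) {r : ℕ} (hr : r ≠ 0) :
    ∑ X ∈ S1 𝓑 d i, traceCount 𝓑 (d + i - 2) X ^ r
      = ∑ X ∈ powersetCard (d + (i - 2) + (i - 2)) univ, traceCount 𝓑 (d + (i - 2)) X ^ r := by
  have hsub : S1 𝓑 d i ⊆ powersetCard (d + (i - 2) + (i - 2)) univ := fun X hX ↦ by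
    have hX := (mem_filter.1 hX).2.1
    rw [mem_powersetCard_univ]
    omega
  rw [Nat.add_sub_assoc hi]
  refine sum_subset hsub fun X hX hXS ↦ ?_
  rw [mem_powersetCard_univ] at hX
  rw [pow_eq_zero_iff hr, traceCount, card_eq_zero, filter_eq_empty_iff]
  intro B hB hXB
  refine hXS (mem_filter.2 ⟨mem_univ X, by omega, fun C hC ↦ ?_⟩)
  rcases eq_or_ne B C with rfl | hBC
  · omega
  · have := card_inter_add_card_inter_le X B C
    have : #(B ∩ C) ≤ d := hd hB hC hBC
    omega

end TraceCount

section Design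

variable {𝓑 : Finset (Finset α)} {v k d i : ℕ}

namespace IsDesign

theorem sized (h : IsDesign 𝓑 v k d) : (𝓑 : Set (Finset α)).Sized k :=
  fun B hB ↦ h.2.2.2.2.1 B hB

theorem pairwise_card_inter_le (h : IsDesign 𝓑 v k d) :
    (𝓑 : Set (Finset α)).Pairwise fun B C ↦ #(B ∩ C) ≤ d :=
  fun B hB C hC ↦ h.2.2.2.2.2.1 B hB C hC

theorem two_mul_le_add (h : IsDesign 𝓑 v k d) : 2 * k ≤ v + d := by
  obtain ⟨rfl, -, -, -, hk, -, B, hB, C, hC, -, hBC⟩ := h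
  have hunion := card_union_add_card_inter B C
  have hle := card_le_univ (B ∪ C)
  rw [hk B hB, hk C hC, hBC] at hunion
  omega

theorem sum_S1_traceCount (h : IsDesign 𝓑 v k d) (hi : 2 ≤ i) :
    ∑ X ∈ S1 𝓑 d i, traceCount 𝓑 (d + i - 2) X
      = #𝓑 * (k.choose (d + (i - 2)) * (v - k).choose (i - 2)) := by
  simpa only [pow_one, sum_traceCount_powersetCard h.sized, h.1] using
    sum_S1_traceCount_pow h.pairwise_card_inter_le hi one_ne_zero

theorem sum_S1_traceCount_sq (h : IsDesign 𝓑 v k d) (hi : 2 ≤ i) :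
    ∑ X ∈ S1 𝓑 d i, traceCount 𝓑 (d + i - 2) X ^ 2
      = ∑ B ∈ 𝓑, (traceCount (𝓑.erase B) d B * (k - d).choose (i - 2) ^ 2
          + k.choose (d + (i - 2)) * (v - k).choose (i - 2)) := by
  rw [sum_S1_traceCount_pow h.pairwise_card_inter_le hi two_ne_zero,
    sum_traceCount_sq_powersetCard h.sized h.pairwise_card_inter_le, h.1]

end IsDesign

/-- The constant `(i-1)(v-k-i+1)(v-k-i+2) / ((d+i-1)(c-i+1)(c-i+2))` with `c = k - d`. In a `β(i)`
design it is, for each block `B`, the average over the members `X` of `S₁` with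
`|X ∩ B| = d + i - 2` of the number of further blocks meeting `X` in `d + i - 2` points. -/
noncomputable def excessRatio (v k d i : ℕ) : ℝ :=
  ((i : ℝ) - 1) * ((v : ℝ) - (k : ℝ) - (i : ℝ) + 1) * ((v : ℝ) - (k : ℝ) - (i : ℝ) + 2)
    / (((d : ℝ) + (i : ℝ) - 1) * (((k - d : ℕ) : ℝ) - (i : ℝ) + 1)
      * (((k - d : ℕ) : ℝ) - (i : ℝ) + 2))

theorem mul_choose_sq_eq_excessRatio_mul {N : ℕ} (hi : 2 ≤ i) (hik : d + i ≤ k) (hkv : k ≤ v)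
    (h : N * ((k - d).choose (i - 1) * (k - d).choose i)
      = k.choose (d + (i - 1)) * (v - k).choose i) :
    (N : ℝ) * (k - d).choose (i - 2) ^ 2
      = excessRatio v k d i * (k.choose (d + (i - 2)) * (v - k).choose (i - 2)) := by
  obtain ⟨j, rfl⟩ := Nat.exists_eq_add_of_le' hi
  obtain ⟨c, rfl⟩ := Nat.exists_eq_add_of_le (le_self_add.trans hik)
  obtain ⟨w, rfl⟩ := Nat.exists_eq_add_of_le hkv
  simp only [Nat.add_sub_cancel_left, Nat.add_sub_cancel, Nat.add_succ_sub_one, excessRatio] at h ⊢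
  have hcast := congrArg (Nat.cast : ℕ → ℝ) h
  simp only [← add_assoc, Nat.cast_mul, cast_choose_succ] at hcast
  push_cast at hcast ⊢
  generalize (c.choose j : ℝ) = x at hcast ⊢
  generalize (w.choose j : ℝ) = y at hcast ⊢
  generalize ((d + c).choose (d + j) : ℝ) = z at hcast ⊢
  have hjc : (j : ℝ) + 2 ≤ c := mod_cast le_of_add_le_add_left hik
  have hd_pos : (0 : ℝ) < d + (j + 2) - 1 := by
    linarith [(d.cast_nonneg : (0 : ℝ) ≤ d), (j.cast_nonneg : (0 : ℝ) ≤ j)]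
  have hc_pos : (0 : ℝ) < c - (j + 2) + 1 := by linarith
  have hc_pos' : (0 : ℝ) < c - (j + 2) + 2 := by linarith
  rw [div_mul_eq_mul_div, eq_div_iff (mul_pos (mul_pos hd_pos hc_pos) hc_pos').ne']
  field_simp at hcast
  refine mul_right_cancel₀ hc_pos'.ne' ?_
  linear_combination hcast

namespace IsBetaDesign

theorem add_le (h : IsBetaDesign 𝓑 v k d i) : d + i ≤ k := by
  obtain ⟨⟨rfl, -, hdk, hkv, hk, -⟩, -, hi, hunique⟩ := h
  obtain ⟨X, hX⟩ := exists_subset_card_eq (s := (univ : Finset α)) (n := d + 2 * i - 1)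
    (by rw [card_univ]; omega)
  obtain ⟨B, ⟨hB, hXB⟩, -⟩ := hunique X hX.2
  exact hXB.trans (hk B hB ▸ card_le_card inter_subset_right)

theorem traceCount_erase_eq_one (h : IsBetaDesign 𝓑 v k d i) {B X : Finset α} (hB : B ∈ 𝓑)
    (hX : #X = d + (i - 1) + i) (hXB : #(X ∩ B) = d + (i - 1)) :
    traceCount (𝓑.erase B) (d + i) X = 1 := by
  obtain ⟨hD, hi, -, hunique⟩ := h
  obtain ⟨C, ⟨hC, hXC⟩, hCunique⟩ := hunique X (by omega)
  have hBC : B ≠ C := by rintro rfl; omega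
  have hXC_le : #(X ∩ C) ≤ d + i := by
    have := card_inter_add_card_inter_le X B C
    have : #(B ∩ C) ≤ d := hD.pairwise_card_inter_le hB hC hBC
    omega
  rw [traceCount, card_eq_one]
  refine ⟨C, eq_singleton_iff_unique_mem.2
    ⟨mem_filter.2 ⟨mem_erase.2 ⟨hBC.symm, hC⟩, hXC_le.antisymm hXC⟩, fun E hE ↦ ?_⟩⟩
  obtain ⟨hE, hXE⟩ := mem_filter.1 hE
  exact hCunique E ⟨mem_of_mem_erase hE, hXE.ge⟩

theorem traceCount_erase_mul_choose (h : IsBetaDesign 𝓑 v k d i) {B : Finset α} (hB : B ∈ 𝓑) :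
    traceCount (𝓑.erase B) d B * ((k - d).choose (i - 1) * (k - d).choose i)
      = k.choose (d + (i - 1)) * (v - k).choose i := by
  have hD := h.1
  rw [← sum_traceCount_erase hD.sized hD.pairwise_card_inter_le hB, ← hD.1, ← hD.sized hB,
    ← card_filter_card_inter_eq, card_eq_sum_ones]
  refine sum_congr rfl fun X hX ↦ ?_
  obtain ⟨hX, hXB⟩ := mem_filter.1 hX
  exact h.traceCount_erase_eq_one hB (mem_powersetCard_univ.1 hX) hXB

theorem sum_S1_traceCount_sq_eq (h : IsBetaDesign 𝓑 v k d i) (hi : 2 ≤ i) :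
    ∑ X ∈ S1 𝓑 d i, (traceCount 𝓑 (d + i - 2) X : ℝ) ^ 2
      = (1 + excessRatio v k d i) * ∑ X ∈ S1 𝓑 d i, (traceCount 𝓑 (d + i - 2) X : ℝ) := by
  have hkv : k ≤ v := h.1.2.2.2.1.le
  have hblock {B} (hB : B ∈ 𝓑) := mul_choose_sq_eq_excessRatio_mul hi h.add_le hkv
    (h.traceCount_erase_mul_choose hB)
  have hsum := h.1.sum_S1_traceCount hi
  have hsq := h.1.sum_S1_traceCount_sq hi
  rify at hsum hsq
  rw [hsq, hsum, sum_congr rfl fun B hB ↦ by rw [hblock hB], sum_const, nsmul_eq_mul]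
  ring

theorem sum_S1_traceCount_pos (h : IsBetaDesign 𝓑 v k d i) (hi : 2 ≤ i) :
    0 < ∑ X ∈ S1 𝓑 d i, traceCount 𝓑 (d + i - 2) X := by
  have hik := h.add_le
  have hkvd := h.1.two_mul_le_add
  rw [h.1.sum_S1_traceCount hi]
  exact Nat.mul_pos (zero_lt_two.trans_le h.1.2.1)
    (Nat.mul_pos (Nat.choose_pos (by omega)) (Nat.choose_pos (by omega)))

end IsBetaDesign

end Design

/-- **Proposition 5.3.** Let `𝓑` be a `β(i)` design with parameter `(v, k, d)`, `i ≥ 2`,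
`c = k - d`, `b = |𝓑|` and `n = |S₁| > 0`.  Then
`(b/n) C(c+d, d+i-2) C(v-k, i-2) ≤ 1 + (i-1)(v-k-i+1)(v-k-i+2)/((d+i-1)(c-i+1)(c-i+2))`,
with equality if and only if the number of blocks `B` with `|B ∩ X| = d + i - 2` does not
depend on the choice of `X ∈ S₁`. -/
theorem prop5_3 (𝓑 : Finset (Finset α)) (v k d i c : ℕ)
    (hB : IsBetaDesign 𝓑 v k d i) (hi : 2 ≤ i) (hc : c = k - d)
    (n : ℕ) (hn : n = (S1 𝓑 d i).card) (hpos : 0 < n) :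
    ((𝓑.card : ℝ) / (n : ℝ)) * ((c + d).choose (d + i - 2) : ℝ) * ((v - k).choose (i - 2) : ℝ)
      ≤ 1 + ((i : ℝ) - 1) * ((v : ℝ) - (k : ℝ) - (i : ℝ) + 1) * ((v : ℝ) - (k : ℝ) - (i : ℝ) + 2)
          / (((d : ℝ) + (i : ℝ) - 1) * ((c : ℝ) - (i : ℝ) + 1) * ((c : ℝ) - (i : ℝ) + 2)) ∧
    (((𝓑.card : ℝ) / (n : ℝ)) * ((c + d).choose (d + i - 2) : ℝ) * ((v - k).choose (i - 2) : ℝ)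
      = 1 + ((i : ℝ) - 1) * ((v : ℝ) - (k : ℝ) - (i : ℝ) + 1) * ((v : ℝ) - (k : ℝ) - (i : ℝ) + 2)
          / (((d : ℝ) + (i : ℝ) - 1) * ((c : ℝ) - (i : ℝ) + 1) * ((c : ℝ) - (i : ℝ) + 2)) ↔
      ∃ m : ℕ, ∀ X ∈ S1 𝓑 d i,
        (𝓑.filter (fun B => (X ∩ B).card = d + i - 2)).card = m) := by
  subst hn hc
  have hmean : ((#𝓑 : ℝ) / #(S1 𝓑 d i)) * ((k - d + d).choose (d + i - 2) : ℝ)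
      * ((v - k).choose (i - 2) : ℝ)
      = (∑ X ∈ S1 𝓑 d i, (traceCount 𝓑 (d + i - 2) X : ℝ)) / #(S1 𝓑 d i) := by
    rw [← Nat.cast_sum, hB.1.sum_S1_traceCount hi, Nat.sub_add_cancel hB.1.2.2.1.le,
      Nat.add_sub_assoc hi]
    push_cast
    ring
  have hsum : 0 < ∑ X ∈ S1 𝓑 d i, (traceCount 𝓑 (d + i - 2) X : ℝ) :=
    mod_cast hB.sum_S1_traceCount_pos hi
  have hsq := hB.sum_S1_traceCount_sq_eq hi
  rw [hmean]
  refine ⟨sum_div_card_le_of_sum_sq_eq hsum hsq,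
    (sum_div_card_eq_iff_of_sum_sq_eq hsum hsq).trans ?_⟩
  simp only [Nat.cast_inj]
  exact Set.pairwise_eq_iff_exists_eq _ _
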